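/- Let 1 < c < 2. Then for every nonzero integer h and all y ≥ 2, ∑_{y<m≤2y} e(h m^{1/c}) ≪ |h|^{1/2} y^{1/(2c)} + |h|^{−1} y^{1−1/c}. -/

import Mathlib

open scoped BigOperators Classical
open Real

noncomputable section

/-- `e(t) = e^{2πit}`. -/
def eC (t : ℝ) : ℂ := Complex.exp (2 * Real.pi * Complex.I * t)

/-- The Piatetski-Shapiro set `ℕ^c = {⌊n^c⌋ : n ∈ ℕ}`. -/
def PS (c : ℝ) : Set ℕ := {m | ∃ n : ℕ, 0 < n ∧ m = ⌊(n : ℝ) ^ c⌋₊}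

/-- The Fourier transform `f̂(α) = ∑_{n ∈ ℤ} f(n) e(αn)` of a finitely
supported function on `ℤ`. -/
def FT (f : ℤ → ℂ) (α : ℝ) : ℂ := ∑ᶠ n : ℤ, f n * eC (α * n)

/-- `w = (1/2) log log x`. -/
def wps (x : ℕ) : ℝ := Real.log (Real.log x) / 2

/-- `W = 4 d³ ∏_{p ≤ w} p`. -/
def Wps (d x : ℕ) : ℕ :=
  4 * d ^ 3 * ∏ p ∈ Finset.filter Nat.Prime (Finset.Iic ⌊wps x⌋₊), p

/-- `σ(b) = #{z ∈ [W] : z^d ≡ -b (mod W)}`. -/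
def sigmaPS (d W b : ℕ) : ℕ :=
  ((Finset.Icc 1 W).filter fun z => (z ^ d + b) % W = 0).card

/-- `N = ⌊x^d / W⌋ + 1`. -/
def Nps (d x : ℕ) : ℕ := ⌊(x : ℝ) ^ d / (Wps d x : ℝ)⌋₊ + 1

/-- `b ∈ [W]` and `-b ∈ (ℤ/Wℤ)^{×d}`. -/
def bSpec (d x b : ℕ) : Prop :=
  b ∈ Finset.Icc 1 (Wps d x) ∧
    ∃ z : (ZMod (Wps d x))ˣ, (z : ZMod (Wps d x)) ^ d = -(b : ZMod (Wps d x))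

/-- `S(d) = 2⌊d²/2⌋`. -/
def Sd (d : ℕ) : ℕ := 2 * (d ^ 2 / 2)

def hD (d : ℕ) : ℝ := 1 / ((d : ℝ) * ((d : ℝ) + 1) ^ 2 - 1)
def kD (d : ℕ) : ℝ := 2 / (27 * (d : ℝ) ^ 2 - 14)
def lD (d : ℕ) : ℝ := 2 / (27 * (d : ℝ) ^ 2 - 5)

/-- `θ(d, c)`. -/
def θdc (d : ℕ) (c : ℝ) : ℝ :=
  if d = 2 then (4 * c + 7) / 13
  else if d = 3 then (15 * c + 14) / 30
  else if d ≤ 11 then (1 + c) / 2 * (1 - hD d)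
  else if 2 ∣ d then (1 + c) / 2 * (1 - kD d)
  else (1 + c) / 2 * (1 - lD d)

/-- `c₂(d)`. -/
def c2ps (d : ℕ) : ℝ :=
  if d = 2 then 1 / 54
  else if d = 3 then 1 / 495
  else if d ≤ 11 then 2 * hD d / (4 * (Sd d : ℝ) + 1 - hD d)
  else if 2 ∣ d then 2 * kD d / (4 * (Sd d : ℝ) + 1 - kD d)
  else 2 * lD d / (4 * (Sd d : ℝ) + 1 - lD d)

/-- The majorant `ν = ν_b` from the density transfer lemma, characterized by
its defining property. -/
def nuSpec (d x : ℕ) (c : ℝ) (b : ℕ) (ν : ℤ → ℝ) : Prop :=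
  (∀ n : ℤ, ∀ p : ℕ, p.Prime → p ∈ PS c → p ≤ x →
      (Wps d x : ℤ) * n - (b : ℤ) = (p : ℤ) ^ d →
      ν n = c * (Nat.totient (Wps d x) : ℝ) /
          ((sigmaPS d (Wps d x) b : ℝ) * (Wps d x : ℝ)) *
          (p : ℝ) ^ ((d : ℝ) - 1 / c) * Real.log p) ∧
  (∀ n : ℤ, (¬ ∃ p : ℕ, p.Prime ∧ p ∈ PS c ∧ p ≤ x ∧
      (Wps d x : ℤ) * n - (b : ℤ) = (p : ℤ) ^ d) → ν n = 0)

/-- The majorant `τ`, characterized by its defining property. -/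
def tauSpec (d x : ℕ) (c : ℝ) (b : ℕ) (τ : ℤ → ℝ) : Prop :=
  (∀ n : ℤ, ∀ m : ℕ, m ∈ PS c → m ≤ x →
      (Wps d x : ℤ) * n - (b : ℤ) = (m : ℤ) ^ d →
      τ n = c / (sigmaPS d (Wps d x) b : ℝ) * (m : ℝ) ^ ((d : ℝ) - 1 / c)) ∧
  (∀ n : ℤ, (¬ ∃ m : ℕ, m ∈ PS c ∧ m ≤ x ∧
      (Wps d x : ℤ) * n - (b : ℤ) = (m : ℤ) ^ d) → τ n = 0)

/-- The function `μ`, characterized by its defining property. -/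
def muSpec (d x : ℕ) (b : ℕ) (μ : ℤ → ℝ) : Prop :=
  (∀ n : ℤ, ∀ m : ℕ, 1 ≤ m → m ≤ x →
      (Wps d x : ℤ) * n - (b : ℤ) = (m : ℤ) ^ d →
      μ n = (m : ℝ) ^ (d - 1) / (sigmaPS d (Wps d x) b : ℝ)) ∧
  (∀ n : ℤ, (¬ ∃ m : ℕ, 1 ≤ m ∧ m ≤ x ∧
      (Wps d x : ℤ) * n - (b : ℤ) = (m : ℤ) ^ d) → μ n = 0)

/-!
On `0 < θ < 1` the kernel `1 / (1 - e(θ))` has constant real part and monotone imaginary part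
`cot (π θ) / 2`. Writing `e(f n) = (e(f n) - e(f (n + 1))) / (1 - e(θ n))` with
`θ n = f (n + 1) - f n`, partial summation telescopes the total variation of the kernel and bounds
`∑ e(f n)` by `1 / δ` when `θ` is monotone and stays `δ` away from the integers (Kusmin–Landau).

If `θ` is only known to drop by at least `l` at each step, split the range according to
`⌊θ n⌋`. The `n` for which `θ n` is within `√l` of an integer are `O(1 / √l + 1)` for each integer,
and Kusmin–Landau handles the others: this is van der Corput's second derivative test.

For `f n = h n ^ γ` on `(y, 2y]` the first differences are of order `A = h y ^ (γ - 1)` and the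
second ones of order `A / y`. If `A ≤ 1 / 2`, Kusmin–Landau gives `O(1 / A)`; otherwise van der
Corput gives `O(√(A y))`.
-/

open scoped fwdDiff

lemma eC_add (s t : ℝ) : eC (s + t) = eC s * eC t := by
  simp only [eC, Complex.ofReal_add, mul_add, Complex.exp_add]

lemma eC_eq_exp_mul_I (t : ℝ) : eC t = Complex.exp (Complex.I * ↑(2 * π * t)) := by
  rw [eC]
  push_cast
  ring_nf

lemma norm_eC (t : ℝ) : ‖eC t‖ = 1 := by
  rw [eC_eq_exp_mul_I, mul_comm, Complex.norm_exp_ofReal_mul_I]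

lemma eC_intCast (k : ℤ) : eC k = 1 :=
  Complex.exp_eq_one_iff.2 ⟨k, by push_cast; ring⟩

lemma eC_add_intCast (t : ℝ) (k : ℤ) : eC (t + k) = eC t := by
  rw [eC_add, eC_intCast, mul_one]

lemma eC_neg (t : ℝ) : eC (-t) = starRingEnd ℂ (eC t) := by
  rw [eC_eq_exp_mul_I, eC_eq_exp_mul_I, ← Complex.exp_conj, map_mul, Complex.conj_I,
    Complex.conj_ofReal, mul_neg, Complex.ofReal_neg, mul_neg, neg_mul]

lemma norm_sum_eC_neg {ι : Type*} (s : Finset ι) (f : ι → ℝ) :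
    ‖∑ i ∈ s, eC (-f i)‖ = ‖∑ i ∈ s, eC (f i)‖ := by
  simp only [eC_neg, ← map_sum, RCLike.norm_conj]

lemma norm_sum_eC_le_card {ι : Type*} (s : Finset ι) (f : ι → ℝ) :
    ‖∑ i ∈ s, eC (f i)‖ ≤ s.card := by
  simpa only [norm_eC, Finset.sum_const, nsmul_eq_mul, mul_one] using
    norm_sum_le s fun i ↦ eC (f i)

lemma norm_one_sub_eC (t : ℝ) : ‖1 - eC t‖ = 2 * |sin (π * t)| := by
  rw [norm_sub_rev, eC_eq_exp_mul_I, Complex.norm_exp_I_mul_ofReal_sub_one, norm_mul,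
    Real.norm_ofNat, Real.norm_eq_abs]
  ring_nf

lemma two_mul_le_sin_pi_mul {t δ : ℝ} (hδ : 0 ≤ δ) (ht : t ∈ Set.Icc δ (1 - δ)) :
    2 * δ ≤ sin (π * t) := by
  have sin_ge_of_le_half : ∀ u, δ ≤ u → u ≤ 1 / 2 → 2 * δ ≤ sin (π * u) := fun u hδu hu ↦
    calc 2 * δ ≤ 2 / π * (π * u) := by field_simp; exact hδu
      _ ≤ sin (π * u) := mul_le_sin (by have := hδ.trans hδu; positivity) (by nlinarith [pi_pos])
  rcases le_total t (1 / 2) with h | h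
  · exact sin_ge_of_le_half t ht.1 h
  · rw [← sin_pi_sub, ← mul_one_sub]
    exact sin_ge_of_le_half (1 - t) (by linarith [ht.2]) (by linarith)

lemma norm_inv_one_sub_eC_le {t δ : ℝ} (hδ : 0 < δ) (ht : t ∈ Set.Icc δ (1 - δ)) :
    ‖(1 - eC t)⁻¹‖ ≤ 1 / (4 * δ) := by
  have hsin := two_mul_le_sin_pi_mul hδ.le ht
  rw [norm_inv, norm_one_sub_eC, inv_eq_one_div]
  exact one_div_le_one_div_of_le (by positivity) (by linarith [le_abs_self (sin (π * t))])

lemma eC_ne_one {t : ℝ} (ht : t ∈ Set.Ioo 0 1) : eC t ≠ 1 := by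
  have hsin : 0 < sin (π * t) :=
    sin_pos_of_pos_of_lt_pi (mul_pos pi_pos ht.1) (mul_lt_of_lt_one_right pi_pos ht.2)
  rw [ne_comm, ← sub_ne_zero, ← norm_ne_zero_iff, norm_one_sub_eC]
  positivity

lemma eC_eq_inv_one_sub_eC_mul {s t : ℝ} (hst : t - s ∈ Set.Ioo 0 1) :
    eC s = (1 - eC (t - s))⁻¹ * (eC s - eC t) := by
  have hne : 1 - eC (t - s) ≠ 0 := sub_ne_zero.2 (eC_ne_one hst).symm
  have ht : eC t = eC s * eC (t - s) := by rw [← eC_add, add_sub_cancel]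
  rw [ht, ← mul_one_sub, mul_left_comm, inv_mul_cancel₀ hne, mul_one]

lemma inv_one_sub_eC {t : ℝ} (ht : t ∈ Set.Ioo 0 1) :
    (1 - eC t)⁻¹ = 1 / 2 + ↑(Real.cot (π * t) / 2) * Complex.I := by
  have hne : 1 - eC t ≠ 0 := sub_ne_zero.2 (eC_ne_one ht).symm
  have hcot : (Real.cot (π * t) : ℂ) = (eC t + 1) / (Complex.I * (1 - eC t)) := by
    rw [Complex.ofReal_cot, Complex.ofReal_mul, Complex.cot_pi_eq_exp_ratio, eC]
  rw [Complex.ofReal_div, hcot, Complex.ofReal_ofNat]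
  field_simp
  ring

lemma antitoneOn_cot : AntitoneOn Real.cot (Set.Ioo 0 π) := by
  intro x hx y hy hxy
  have hsin : 0 ≤ sin (y - x) :=
    sin_nonneg_of_nonneg_of_le_pi (by linarith) (by linarith [hx.1, hy.2])
  rw [sin_sub] at hsin
  rw [cot_eq_cos_div_sin, cot_eq_cos_div_sin,
    div_le_div_iff₀ (sin_pos_of_mem_Ioo hy) (sin_pos_of_mem_Ioo hx)]
  linarith

lemma norm_inv_one_sub_eC_sub {s t : ℝ} (hs : s ∈ Set.Ioo 0 1) (ht : t ∈ Set.Ioo 0 1)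
    (hst : s ≤ t) :
    ‖(1 - eC s)⁻¹ - (1 - eC t)⁻¹‖ = Real.cot (π * s) / 2 - Real.cot (π * t) / 2 := by
  have pi_mul_mem : ∀ u ∈ Set.Ioo (0 : ℝ) 1, π * u ∈ Set.Ioo 0 π := fun u hu ↦
    ⟨mul_pos pi_pos hu.1, mul_lt_of_lt_one_right pi_pos hu.2⟩
  have hcot := antitoneOn_cot (pi_mul_mem s hs) (pi_mul_mem t ht) (by gcongr)
  rw [inv_one_sub_eC hs, inv_one_sub_eC ht, add_sub_add_left_eq_sub, ← sub_mul,
    ← Complex.ofReal_sub, norm_mul, Complex.norm_I, mul_one, Complex.norm_real,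
    Real.norm_of_nonneg (by linarith)]

lemma abs_cot_pi_mul_le {t δ : ℝ} (hδ : 0 < δ) (ht : t ∈ Set.Icc δ (1 - δ)) :
    |Real.cot (π * t) / 2| ≤ 1 / (4 * δ) := by
  have ht' : t ∈ Set.Ioo 0 1 := ⟨by linarith [ht.1], by linarith [ht.2]⟩
  have him : ((1 - eC t)⁻¹).im = Real.cot (π * t) / 2 := by
    rw [inv_one_sub_eC ht', Complex.add_im, Complex.im_ofReal_mul, Complex.I_im]
    norm_num
  exact him ▸ (Complex.abs_im_le_norm _).trans (norm_inv_one_sub_eC_le hδ ht)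

lemma sum_range_succ_mul_sub_succ {R : Type*} [CommRing R] (g u : ℕ → R) (N : ℕ) :
    ∑ n ∈ Finset.range (N + 1), g n * (u n - u (n + 1)) =
      g 0 * u 0 - g N * u (N + 1) + ∑ n ∈ Finset.range N, (g (n + 1) - g n) * u (n + 1) := by
  induction N with
  | zero => simp only [zero_add, Finset.sum_range_one, Finset.sum_range_zero]; ring
  | succ N ih => rw [Finset.sum_range_succ, ih, Finset.sum_range_succ _ N]; ring

lemma norm_sum_range_eC_le {f : ℕ → ℝ} {N : ℕ} {δ : ℝ} (hδ : 0 < δ)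
    (hanti : AntitoneOn (Δ_[1] f) (Set.Iio N))
    (hmaps : Set.MapsTo (Δ_[1] f) (Set.Iio N) (Set.Icc δ (1 - δ))) :
    ‖∑ n ∈ Finset.range N, eC (f n)‖ ≤ 1 / δ := by
  rcases N with - | N
  · simpa using hδ.le
  set θ := Δ_[1] f
  set g : ℕ → ℂ := fun n ↦ (1 - eC (θ n))⁻¹
  set c : ℕ → ℝ := fun n ↦ Real.cot (π * θ n) / 2
  have hmaps' : ∀ n < N + 1, θ n ∈ Set.Ioo 0 1 := fun n hn ↦
    ⟨hδ.trans_le (hmaps hn).1, by linarith [(hmaps hn).2]⟩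
  have eC_eq : ∀ n ∈ Finset.range (N + 1), eC (f n) = g n * (eC (f n) - eC (f (n + 1))) :=
    fun n hn ↦ eC_eq_inv_one_sub_eC_mul (hmaps' n (Finset.mem_range.1 hn))
  have norm_boundary : ∀ n < N + 1, ∀ m, ‖g n * eC (f m)‖ ≤ 1 / (4 * δ) := fun n hn m ↦ by
    rw [norm_mul, norm_eC, mul_one]
    exact norm_inv_one_sub_eC_le hδ (hmaps hn)
  have norm_variation :
      ‖∑ n ∈ Finset.range N, (g (n + 1) - g n) * eC (f (n + 1))‖ ≤ c N - c 0 := by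
    rw [← Finset.sum_range_sub c]
    refine norm_sum_le_of_le _ fun n hn ↦ ?_
    have hn : n + 1 < N + 1 := by simpa using hn
    have hn' : n < N + 1 := by lia
    rw [norm_mul, norm_eC, mul_one]
    exact (norm_inv_one_sub_eC_sub (hmaps' _ hn) (hmaps' _ hn')
      (hanti hn' hn n.le_succ)).le
  have hcN := abs_le.1 (abs_cot_pi_mul_le hδ (hmaps (Set.mem_Iio.2 N.lt_succ_self)))
  have hc0 := abs_le.1 (abs_cot_pi_mul_le hδ (hmaps (Set.mem_Iio.2 N.succ_pos)))
  rw [Finset.sum_congr rfl eC_eq, sum_range_succ_mul_sub_succ g (fun n ↦ eC (f n))]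
  calc _ ≤ ‖g 0 * eC (f 0)‖ + ‖g N * eC (f (N + 1))‖ +
        ‖∑ n ∈ Finset.range N, (g (n + 1) - g n) * eC (f (n + 1))‖ :=
        (norm_add_le _ _).trans (by gcongr; exact norm_sub_le _ _)
    _ ≤ 1 / (4 * δ) + 1 / (4 * δ) + (1 / (4 * δ) - -(1 / (4 * δ))) := by
        gcongr
        · exact norm_boundary 0 N.succ_pos 0
        · exact norm_boundary N N.lt_succ_self (N + 1)
        · exact norm_variation.trans (sub_le_sub hcN.2 hc0.1)
    _ = 1 / δ := by field_simp; norm_num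

lemma exists_eq_Ico_of_ordConnected {s : Finset ℤ} (hs : (s : Set ℤ).OrdConnected) :
    ∃ a b, s = Finset.Ico a b := by
  rcases s.eq_empty_or_nonempty with rfl | hne
  · exact ⟨0, 0, rfl⟩
  refine ⟨s.min' hne, s.max' hne + 1, Finset.ext fun n ↦ ?_⟩
  rw [Finset.mem_Ico, Int.lt_add_one_iff]
  exact ⟨fun hn ↦ ⟨s.min'_le n hn, s.le_max' n hn⟩,
    fun hn ↦ hs.out (s.min'_mem hne) (s.max'_mem hne) hn⟩

lemma ordConnected_filter_of_antitoneOn {α β : Type*} [Preorder α] [Preorder β] {s : Finset α}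
    (hs : (s : Set α).OrdConnected) {g : α → β} (hg : AntitoneOn g s) {t : Set β}
    (ht : t.OrdConnected) [DecidablePred (g · ∈ t)] :
    ((s.filter (g · ∈ t) : Finset α) : Set α).OrdConnected := by
  obtain ⟨u, hu, hsu⟩ := ht.preimage_antitoneOn hg
  rw [Finset.coe_filter]
  change ((s : Set α) ∩ g ⁻¹' t).OrdConnected
  exact hsu ▸ hs.inter hu

lemma sum_Ico_int_eq_sum_range {M : Type*} [AddCommMonoid M] (g : ℤ → M) (a b : ℤ) :
    ∑ n ∈ Finset.Ico a b, g n = ∑ j ∈ Finset.range (b - a).toNat, g (a + j) := by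
  rw [Int.Ico_eq_finset_map, Finset.sum_map]
  rfl

section

variable {s : Finset ℤ} {f : ℤ → ℝ}

theorem norm_sum_eC_le_of_antitoneOn_fwdDiff (hs : (s : Set ℤ).OrdConnected) {δ : ℝ} (hδ : 0 < δ)
    (k : ℤ) (hanti : AntitoneOn (Δ_[1] f) s)
    (hmaps : Set.MapsTo (Δ_[1] f) s (Set.Icc (k + δ) (k + 1 - δ))) :
    ‖∑ n ∈ s, eC (f n)‖ ≤ 1 / δ := by
  obtain ⟨a, b, rfl⟩ := exists_eq_Ico_of_ordConnected hs
  set F : ℕ → ℝ := fun j ↦ f (a + j) - k * j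
  have eC_eq : ∀ j : ℕ, eC (f (a + j)) = eC (F j) := fun j ↦ by
    rw [← eC_add_intCast (F j) (k * j)]
    push_cast
    rw [sub_add_cancel]
  have fwdDiff_F : ∀ j : ℕ, Δ_[1] F j = Δ_[1] f (a + j) - k := fun j ↦ by
    simp only [F, fwdDiff, Nat.cast_add, Nat.cast_one, add_assoc]
    ring
  have mem_of_lt : ∀ j ∈ Set.Iio (b - a).toNat, a + (j : ℤ) ∈ Finset.Ico a b := fun j hj ↦ by
    rw [Set.mem_Iio] at hj
    rw [Finset.mem_Ico]
    lia
  rw [sum_Ico_int_eq_sum_range, Finset.sum_congr rfl fun j _ ↦ eC_eq j]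
  refine norm_sum_range_eC_le hδ (fun i hi j hj hij ↦ ?_) fun j hj ↦ ?_
  · rw [fwdDiff_F, fwdDiff_F]
    gcongr
    exact hanti (mem_of_lt i hi) (mem_of_lt j hj) (by gcongr)
  · obtain ⟨hlow, hupp⟩ := hmaps (mem_of_lt j hj)
    rw [fwdDiff_F]
    exact ⟨by linarith, by linarith⟩

lemma card_le_of_antitoneOn_add_mul {θ : ℤ → ℝ} {l u v : ℝ} (hl : 0 < l) (huv : u ≤ v)
    (hanti : AntitoneOn (fun n ↦ θ n + l * n) s) (hmaps : Set.MapsTo θ s (Set.Icc u v)) :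
    (s.card : ℝ) ≤ (v - u) / l + 1 := by
  rcases s.eq_empty_or_nonempty with rfl | hne
  · have : 0 ≤ v - u := sub_nonneg.2 huv
    rw [Finset.card_empty, Nat.cast_zero]
    positivity
  set a := s.min' hne
  set b := s.max' hne
  have hab : a ≤ b := s.min'_le _ (s.max'_mem hne)
  have hcard : (s.card : ℝ) ≤ b - a + 1 := by
    have hsub : s ⊆ Finset.Icc a b := fun n hn ↦
      Finset.mem_Icc.2 ⟨s.min'_le n hn, s.le_max' n hn⟩
    have := Finset.card_le_card hsub
    rw [Int.card_Icc] at this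
    have : (s.card : ℤ) ≤ b - a + 1 := by lia
    exact_mod_cast this
  have hdrop : θ b + l * b ≤ θ a + l * a := hanti (s.min'_mem hne) (s.max'_mem hne) hab
  have hθa := (hmaps (s.min'_mem hne)).2
  have hθb := (hmaps (s.max'_mem hne)).1
  have : (b - a : ℝ) ≤ (v - u) / l := by
    rw [le_div_iff₀ hl]
    linarith
  linarith

lemma antitoneOn_of_antitoneOn_add_mul {t : Set ℤ} {θ : ℤ → ℝ} {l : ℝ} (hl : 0 ≤ l)
    (hanti : AntitoneOn (fun n ↦ θ n + l * n) t) : AntitoneOn θ t := fun m hm n hn hmn ↦ by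
  have : l * m ≤ l * n := by gcongr
  linarith [hanti hm hn hmn]

lemma norm_sum_eC_le_of_mapsTo_unitInterval (hs : (s : Set ℤ).OrdConnected) {l δ : ℝ} (hl : 0 < l)
    (hδ : 0 < δ) (k : ℤ) (hanti : AntitoneOn (fun n ↦ Δ_[1] f n + l * n) s)
    (hmaps : Set.MapsTo (Δ_[1] f) s (Set.Icc k (k + 1))) :
    ‖∑ n ∈ s, eC (f n)‖ ≤ 1 / δ + 2 * (δ / l + 1) := by
  set θ := Δ_[1] f
  have θ_antitoneOn : AntitoneOn θ s := antitoneOn_of_antitoneOn_add_mul hl.le hanti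
  have norm_middle : ‖∑ n ∈ s with θ n ∈ Set.Icc (k + δ) (k + 1 - δ), eC (f n)‖ ≤ 1 / δ :=
    norm_sum_eC_le_of_antitoneOn_fwdDiff
      (ordConnected_filter_of_antitoneOn hs θ_antitoneOn Set.ordConnected_Icc) hδ k
      (θ_antitoneOn.mono (Finset.filter_subset _ s)) fun n hn ↦ (Finset.mem_filter.1 hn).2
  have card_window : ∀ u, ((s.filter (θ · ∈ Set.Icc u (u + δ))).card : ℝ) ≤ δ / l + 1 := fun u ↦ by
    simpa only [add_sub_cancel_left] using
      card_le_of_antitoneOn_add_mul hl (le_add_of_nonneg_right hδ.le)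
        (hanti.mono (Finset.filter_subset _ s)) fun n hn ↦ (Finset.mem_filter.1 hn).2
  have edges_subset : (s.filter (θ · ∉ Set.Icc (k + δ) (k + 1 - δ))) ⊆
      s.filter (θ · ∈ Set.Icc (k : ℝ) (k + δ)) ∪
        s.filter (θ · ∈ Set.Icc (k + 1 - δ) (k + 1 - δ + δ)) := fun n hn ↦ by
    obtain ⟨hns, hn⟩ := Finset.mem_filter.1 hn
    rw [← Finset.filter_or, Finset.mem_filter]
    obtain ⟨hk, hk'⟩ := hmaps hns
    rcases lt_or_ge (θ n) (k + δ) with h | h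
    · exact ⟨hns, .inl ⟨hk, h.le⟩⟩
    · exact ⟨hns, .inr ⟨(not_le.1 fun h' ↦ hn ⟨h, h'⟩).le, by linarith⟩⟩
  have card_edges : ((s.filter (θ · ∉ Set.Icc (k + δ) (k + 1 - δ))).card : ℝ) ≤
      2 * (δ / l + 1) :=
    calc _ ≤ ((s.filter (θ · ∈ Set.Icc (k : ℝ) (k + δ))).card : ℝ) +
          (s.filter (θ · ∈ Set.Icc (k + 1 - δ) (k + 1 - δ + δ))).card := by
          exact_mod_cast (Finset.card_le_card edges_subset).trans (Finset.card_union_le _ _)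
      _ ≤ 2 * (δ / l + 1) := by linarith [card_window k, card_window (k + 1 - δ)]
  rw [← Finset.sum_filter_add_sum_filter_not s (θ · ∈ Set.Icc (k + δ) (k + 1 - δ))]
  exact (norm_add_le _ _).trans
    (add_le_add norm_middle ((norm_sum_eC_le_card _ _).trans card_edges))

theorem norm_sum_eC_le_of_antitoneOn_fwdDiff_add_mul (hs : (s : Set ℤ).OrdConnected)
    {l u v : ℝ} (hl : 0 < l) (huv : u ≤ v) (hanti : AntitoneOn (fun n ↦ Δ_[1] f n + l * n) s)
    (hmaps : Set.MapsTo (Δ_[1] f) s (Set.Icc u v)) :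
    ‖∑ n ∈ s, eC (f n)‖ ≤ (v - u + 2) * (3 / √l + 2) := by
  set θ := Δ_[1] f
  have floor_mem : ∀ n ∈ s, ⌊θ n⌋ ∈ Finset.Icc ⌊u⌋ ⌊v⌋ := fun n hn ↦
    Finset.mem_Icc.2 ⟨Int.floor_le_floor (hmaps hn).1, Int.floor_le_floor (hmaps hn).2⟩
  have norm_fiber : ∀ k ∈ Finset.Icc ⌊u⌋ ⌊v⌋,
      ‖∑ n ∈ s with ⌊θ n⌋ = k, eC (f n)‖ ≤ 3 / √l + 2 := fun k _ ↦ by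
    have fiber_eq : s.filter (⌊θ ·⌋ = k) = s.filter (θ · ∈ Set.Ico (k : ℝ) (k + 1)) :=
      Finset.filter_congr fun n _ ↦ Int.floor_eq_iff
    have hbound := norm_sum_eC_le_of_mapsTo_unitInterval (f := f)
      (ordConnected_filter_of_antitoneOn hs (antitoneOn_of_antitoneOn_add_mul hl.le hanti)
        Set.ordConnected_Ico) hl (sqrt_pos.2 hl) k
      (hanti.mono (Finset.filter_subset _ s)) fun n hn ↦
        Set.Ico_subset_Icc_self (Finset.mem_filter.1 hn).2
    rw [fiber_eq]
    refine hbound.trans_eq ?_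
    rw [sqrt_div_self]
    ring
  have card_Icc_floor : ((Finset.Icc ⌊u⌋ ⌊v⌋).card : ℝ) ≤ v - u + 2 := by
    have hcard : ((Finset.Icc ⌊u⌋ ⌊v⌋).card : ℤ) = ⌊v⌋ + 1 - ⌊u⌋ :=
      Int.card_Icc_of_le _ _ (by linarith [Int.floor_le_floor huv])
    have hcard' : ((Finset.Icc ⌊u⌋ ⌊v⌋).card : ℝ) = ⌊v⌋ + 1 - ⌊u⌋ := by exact_mod_cast hcard
    linarith [Int.floor_le v, Int.lt_floor_add_one u]
  rw [← Finset.sum_fiberwise_of_maps_to floor_mem]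
  calc _ ≤ ((Finset.Icc ⌊u⌋ ⌊v⌋).card : ℝ) * (3 / √l + 2) :=
        (norm_sum_le_of_le _ norm_fiber).trans_eq (by rw [Finset.sum_const, nsmul_eq_mul])
    _ ≤ (v - u + 2) * (3 / √l + 2) := by gcongr

theorem norm_sum_eC_le_mul_sqrt (hs : (s : Set ℤ).OrdConnected) {A y μ : ℝ} (hA : 1 / 2 ≤ A)
    (hy : 0 < y) (hμ : 0 < μ) (hcard : (s.card : ℝ) ≤ 2 * y)
    (hanti : AntitoneOn (fun n ↦ Δ_[1] f n + μ * (A / y) * n) s)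
    (hmaps : Set.MapsTo (Δ_[1] f) s (Set.Icc 0 A)) :
    ‖∑ n ∈ s, eC (f n)‖ ≤ (15 / √μ + 10) * √(A * y) := by
  have hA0 : 0 < A := by linarith
  rcases le_total y A with hyA | hAy
  · calc ‖∑ n ∈ s, eC (f n)‖ ≤ 2 * y := (norm_sum_eC_le_card s f).trans hcard
      _ ≤ (15 / √μ + 10) * √(A * y) := by
        gcongr
        · linarith [show 0 ≤ 15 / √μ by positivity]
        · exact le_sqrt_of_sq_le (by nlinarith)
  · have hsqrt : A / √(μ * (A / y)) = √(A * y) / √μ := by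
      rw [← sqrt_div (by positivity), div_eq_iff (by positivity), ← sqrt_mul (by positivity)]
      rw [eq_comm, sqrt_eq_iff_mul_self_eq (by positivity) (by positivity)]
      field_simp
    calc ‖∑ n ∈ s, eC (f n)‖ ≤ (A - 0 + 2) * (3 / √(μ * (A / y)) + 2) :=
          norm_sum_eC_le_of_antitoneOn_fwdDiff_add_mul hs (by positivity) hA0.le hanti hmaps
      _ ≤ 5 * A * (3 / √(μ * (A / y)) + 2) := by gcongr; linarith
      _ = 15 * (A / √(μ * (A / y))) + 10 * A := by ring
      _ ≤ 15 * (√(A * y) / √μ) + 10 * √(A * y) := by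
        rw [hsqrt]
        gcongr
        exact le_sqrt_of_sq_le (by nlinarith)
      _ = (15 / √μ + 10) * √(A * y) := by ring

end

lemma exists_rpow_add_one_sub_rpow_eq (p : ℝ) {x : ℝ} (hx : 0 < x) :
    ∃ ξ ∈ Set.Ioo x (x + 1), (x + 1) ^ p - x ^ p = p * ξ ^ (p - 1) := by
  have pos_of_mem : ∀ t ∈ Set.Icc x (x + 1), t ≠ 0 := fun t ht ↦ (hx.trans_le ht.1).ne'
  obtain ⟨ξ, hξ, hslope⟩ := exists_hasDerivAt_eq_slope (fun t : ℝ ↦ t ^ p)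
    (fun t ↦ p * t ^ (p - 1)) (lt_add_one x)
    (fun t ht ↦ (continuousAt_rpow_const t p (.inl (pos_of_mem t ht))).continuousWithinAt)
    (fun t ht ↦ hasDerivAt_rpow_const (.inl (pos_of_mem t (Set.Ioo_subset_Icc_self ht))))
  exact ⟨ξ, hξ, by rw [hslope, add_sub_cancel_left, div_one]⟩

section

variable {γ : ℝ}

lemma rpow_add_one_sub_rpow_mem_Icc (hγ : γ ∈ Set.Icc 0 1) {x : ℝ} (hx : 0 < x) :
    (x + 1) ^ γ - x ^ γ ∈ Set.Icc (γ * (x + 1) ^ (γ - 1)) (γ * x ^ (γ - 1)) := by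
  obtain ⟨ξ, ⟨hxξ, hξx⟩, hξ⟩ := exists_rpow_add_one_sub_rpow_eq γ hx
  have hexp : γ - 1 ≤ 0 := sub_nonpos.2 hγ.2
  rw [hξ]
  exact ⟨mul_le_mul_of_nonneg_left
      (rpow_le_rpow_of_nonpos (hx.trans hxξ) hξx.le hexp) hγ.1,
    mul_le_mul_of_nonneg_left (rpow_le_rpow_of_nonpos hx hxξ.le hexp) hγ.1⟩

lemma antitoneOn_rpow_add_one_sub_rpow_add_mul (hγ : γ ∈ Set.Icc 0 1) (M : ℝ) :
    AntitoneOn (fun x : ℝ ↦ (x + 1) ^ γ - x ^ γ + γ * (1 - γ) * M ^ (γ - 2) * x)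
      (Set.Ioc 0 (M - 1)) := by
  have hderiv : ∀ x : ℝ, 0 < x →
      HasDerivAt (fun x : ℝ ↦ (x + 1) ^ γ - x ^ γ + γ * (1 - γ) * M ^ (γ - 2) * x)
        (γ * (x + 1) ^ (γ - 1) - γ * x ^ (γ - 1) + γ * (1 - γ) * M ^ (γ - 2)) x := fun x hx ↦ by
    have hshift := (hasDerivAt_rpow_const (x := x + 1) (p := γ)
      (.inl (by positivity))).comp_add_const x 1
    have hrpow := hasDerivAt_rpow_const (x := x) (p := γ) (.inl hx.ne')
    have hsum := (hshift.sub hrpow).add ((hasDerivAt_id x).const_mul (γ * (1 - γ) * M ^ (γ - 2)))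
    rw [mul_one] at hsum
    exact hsum
  refine antitoneOn_of_hasDerivWithinAt_nonpos (convex_Ioc 0 (M - 1))
    (fun x hx ↦ (hderiv x hx.1).continuousAt.continuousWithinAt)
    (fun x hx ↦ (hderiv x (interior_subset hx).1).hasDerivWithinAt) fun x hx ↦ ?_
  obtain ⟨hx0, hxM⟩ := interior_subset hx
  obtain ⟨ξ, ⟨hxξ, hξx⟩, hξ⟩ := exists_rpow_add_one_sub_rpow_eq (γ - 1) hx0
  have hpow : M ^ (γ - 2) ≤ ξ ^ (γ - 1 - 1) := by
    rw [sub_sub, one_add_one_eq_two]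
    exact rpow_le_rpow_of_nonpos (hx0.trans hxξ) (by linarith) (by linarith [hγ.2])
  calc γ * (x + 1) ^ (γ - 1) - γ * x ^ (γ - 1) + γ * (1 - γ) * M ^ (γ - 2)
      = γ * (1 - γ) * (M ^ (γ - 2) - ξ ^ (γ - 1 - 1)) := by rw [← mul_sub, hξ]; ring
    _ ≤ 0 := mul_nonpos_of_nonneg_of_nonpos (mul_nonneg hγ.1 (sub_nonneg.2 hγ.2))
        (sub_nonpos.2 hpow)

end

section

variable {γ h y : ℝ}

lemma intCast_mem_Ioc_of_mem_Ioc_floor (hy : 0 < y) {m : ℤ} (hm : m ∈ Finset.Ioc ⌊y⌋ ⌊2 * y⌋) :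
    (m : ℝ) ∈ Set.Ioc y (4 * y - 1) := by
  rw [Finset.mem_Ioc, Int.floor_lt, Int.le_floor] at hm
  have hm1 : (1 : ℝ) ≤ m := by exact_mod_cast (by exact_mod_cast hy.trans hm.1 : 0 < m)
  exact ⟨hm.1, by linarith⟩

lemma card_Ioc_floor_le (hy : 0 < y) : ((Finset.Ioc ⌊y⌋ ⌊2 * y⌋).card : ℝ) ≤ 2 * y := by
  have hcard : ((Finset.Ioc ⌊y⌋ ⌊2 * y⌋).card : ℤ) ≤ ⌊2 * y⌋ := by
    rw [Int.card_Ioc_of_le _ _ (Int.floor_le_floor (by linarith))]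
    linarith [Int.floor_nonneg.2 hy.le]
  exact_mod_cast Int.le_floor.1 hcard

lemma fwdDiff_mul_rpow_mem_Icc (hγ : γ ∈ Set.Icc 0 1) (hh : 0 ≤ h) (hy : 0 < y) {m : ℤ}
    (hm : m ∈ Finset.Ioc ⌊y⌋ ⌊2 * y⌋) :
    Δ_[1] (fun n : ℤ ↦ h * (n : ℝ) ^ γ) m ∈
      Set.Icc (γ * 4 ^ (γ - 1) * (h * y ^ (γ - 1))) (h * y ^ (γ - 1)) := by
  obtain ⟨hym, hmy⟩ := intCast_mem_Ioc_of_mem_Ioc_floor hy hm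
  have hm0 : (0 : ℝ) < m := hy.trans hym
  have hexp : γ - 1 ≤ 0 := sub_nonpos.2 hγ.2
  obtain ⟨hlow, hupp⟩ := rpow_add_one_sub_rpow_mem_Icc hγ hm0
  rw [fwdDiff, ← mul_sub, Int.cast_add, Int.cast_one]
  constructor
  · calc γ * 4 ^ (γ - 1) * (h * y ^ (γ - 1)) = h * (γ * (4 * y) ^ (γ - 1)) := by
          rw [mul_rpow (by norm_num) hy.le]; ring
      _ ≤ h * (γ * (m + 1) ^ (γ - 1)) := by
          have := rpow_le_rpow_of_nonpos (add_pos hm0 one_pos) (le_sub_iff_add_le.1 hmy) hexp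
          have := hγ.1
          gcongr
      _ ≤ _ := by gcongr
  · gcongr
    calc _ ≤ γ * (m : ℝ) ^ (γ - 1) := hupp
      _ ≤ (m : ℝ) ^ (γ - 1) := mul_le_of_le_one_left (by positivity) hγ.2
      _ ≤ y ^ (γ - 1) := rpow_le_rpow_of_nonpos hy hym.le hexp

lemma antitoneOn_fwdDiff_mul_rpow_add_mul (hγ : γ ∈ Set.Icc 0 1) (hh : 0 ≤ h) (hy : 0 < y) :
    AntitoneOn (fun m ↦ Δ_[1] (fun n : ℤ ↦ h * (n : ℝ) ^ γ) m +
      γ * (1 - γ) * 4 ^ (γ - 2) * (h * y ^ (γ - 1) / y) * m) (Finset.Ioc ⌊y⌋ ⌊2 * y⌋) := by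
  have mem_Ioc : ∀ m ∈ Finset.Ioc ⌊y⌋ ⌊2 * y⌋, (m : ℝ) ∈ Set.Ioc 0 (4 * y - 1) := fun m hm ↦
    Set.Ioc_subset_Ioc_left hy.le (intCast_mem_Ioc_of_mem_Ioc_floor hy hm)
  have fwdDiff_add_eq : ∀ m : ℤ, Δ_[1] (fun n : ℤ ↦ h * (n : ℝ) ^ γ) m +
      γ * (1 - γ) * 4 ^ (γ - 2) * (h * y ^ (γ - 1) / y) * m =
      h * (((m : ℝ) + 1) ^ γ - (m : ℝ) ^ γ + γ * (1 - γ) * (4 * y) ^ (γ - 2) * m) := fun m ↦ by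
    have hpow : y ^ (γ - 2) = y ^ (γ - 1) / y := by
      rw [← rpow_sub_one hy.ne', sub_sub, one_add_one_eq_two]
    rw [fwdDiff, mul_rpow (by norm_num) hy.le, hpow]
    push_cast
    ring
  intro m hm n hn hmn
  simp only [fwdDiff_add_eq]
  exact mul_le_mul_of_nonneg_left (antitoneOn_rpow_add_one_sub_rpow_add_mul hγ (4 * y)
    (mem_Ioc m hm) (mem_Ioc n hn) (by exact_mod_cast hmn)) hh

lemma norm_sum_eC_mul_rpow_le (hγ : γ ∈ Set.Ioo 0 1) (hh : 0 < h) (hy : 0 < y) :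
    ‖∑ m ∈ Finset.Ioc ⌊y⌋ ⌊2 * y⌋, eC (h * (m : ℝ) ^ γ)‖ ≤
      (15 / √(γ * (1 - γ) * 4 ^ (γ - 2)) + 10 + 1 / (γ * 4 ^ (γ - 1))) *
        (√(h * y ^ (γ - 1) * y) + (h * y ^ (γ - 1))⁻¹) := by
  have hγ' := Set.Ioo_subset_Icc_self hγ
  obtain ⟨hγ0, hγ1⟩ := hγ
  set A := h * y ^ (γ - 1)
  set κ := γ * (4 : ℝ) ^ (γ - 1)
  set μ := γ * (1 - γ) * (4 : ℝ) ^ (γ - 2)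
  have hA : 0 < A := by positivity
  have hμ : 0 < μ := mul_pos (mul_pos hγ0 (sub_pos.2 hγ1)) (by positivity)
  have hconn : ((Finset.Ioc ⌊y⌋ ⌊2 * y⌋ : Finset ℤ) : Set ℤ).OrdConnected := by
    rw [Finset.coe_Ioc]
    exact Set.ordConnected_Ioc
  have hanti := antitoneOn_fwdDiff_mul_rpow_add_mul hγ' hh.le hy
  rcases le_total (1 / 2) A with hA_half | hA_half
  · calc _ ≤ (15 / √μ + 10) * √(A * y) :=
          norm_sum_eC_le_mul_sqrt hconn hA_half hy hμ (card_Ioc_floor_le hy) hanti fun m hm ↦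
            Set.Icc_subset_Icc_left (by positivity) (fwdDiff_mul_rpow_mem_Icc hγ' hh.le hy hm)
      _ ≤ _ := mul_le_mul (le_add_of_nonneg_right (by positivity))
          (le_add_of_nonneg_right (by positivity)) (by positivity) (by positivity)
  · have hκ1 : κ ≤ 1 := mul_le_one₀ hγ1.le (by positivity)
      (rpow_le_one_of_one_le_of_nonpos (by norm_num) (sub_nonpos.2 hγ1.le))
    have hunit : Set.Icc (κ * A) A ⊆ Set.Icc ((0 : ℤ) + κ * A) ((0 : ℤ) + 1 - κ * A) := by
      rw [Int.cast_zero, zero_add, zero_add]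
      exact Set.Icc_subset_Icc_right (by linarith [mul_le_of_le_one_left hA.le hκ1])
    calc _ ≤ 1 / (κ * A) :=
          norm_sum_eC_le_of_antitoneOn_fwdDiff hconn (by positivity) 0
            (antitoneOn_of_antitoneOn_add_mul (by positivity) hanti) fun m hm ↦
              hunit (fwdDiff_mul_rpow_mem_Icc hγ' hh.le hy hm)
      _ = 1 / κ * A⁻¹ := by rw [← one_div_mul_one_div, one_div A]
      _ ≤ _ := mul_le_mul (le_add_of_nonneg_left (by positivity))
          (le_add_of_nonneg_left (by positivity)) (by positivity) (by positivity)

end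

theorem stmt12_general (c : ℝ) (hc : 1 < c) :
    ∃ C : ℝ, 0 < C ∧ ∀ h : ℝ, h ≠ 0 → ∀ y : ℝ, 0 < y →
      ‖∑ m ∈ Finset.Ioc ⌊y⌋ ⌊2 * y⌋, eC (h * (m : ℝ) ^ (1 / c))‖ ≤
        C * (|h| ^ ((1 : ℝ) / 2) * y ^ (1 / (2 * c)) + |h|⁻¹ * y ^ (1 - 1 / c)) := by
  set γ := 1 / c with hγc
  have hγ : γ ∈ Set.Ioo 0 1 := ⟨by positivity, (div_lt_one (by positivity)).2 hc⟩
  refine ⟨15 / √(γ * (1 - γ) * 4 ^ (γ - 2)) + 10 + 1 / (γ * 4 ^ (γ - 1)), by positivity,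
    fun h hh y hy ↦ ?_⟩
  have norm_abs : ‖∑ m ∈ Finset.Ioc ⌊y⌋ ⌊2 * y⌋, eC (h * (m : ℝ) ^ γ)‖ =
      ‖∑ m ∈ Finset.Ioc ⌊y⌋ ⌊2 * y⌋, eC (|h| * (m : ℝ) ^ γ)‖ := by
    rcases abs_choice h with habs | habs
    · rw [habs]
    · simp only [habs, neg_mul, norm_sum_eC_neg]
  have sqrt_eq : √(|h| * y ^ (γ - 1) * y) = |h| ^ ((1 : ℝ) / 2) * y ^ (1 / (2 * c)) := by
    rw [mul_assoc, ← rpow_add_one hy.ne', sub_add_cancel, sqrt_eq_rpow,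
      mul_rpow (abs_nonneg h) (by positivity), ← rpow_mul hy.le, hγc, one_div_mul_one_div,
      mul_comm c]
  have inv_eq : (|h| * y ^ (γ - 1))⁻¹ = |h|⁻¹ * y ^ (1 - γ) := by
    rw [mul_inv, ← rpow_neg hy.le, neg_sub]
  rw [norm_abs, ← sqrt_eq, ← inv_eq]
  exact norm_sum_eC_mul_rpow_le hγ (abs_pos.2 hh) hy

/-- exponential sum estimate via the exponent pair `(1/2, 1/2)`:
`∑_{y<m≤2y} e(h m^{1/c}) ≪ |h|^{1/2} y^{1/(2c)} + |h|⁻¹ y^{1−1/c}`. -/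
theorem stmt12 (c : ℝ) (hc1 : 1 < c) (hc2 : c < 2) :
    ∃ C : ℝ, 0 < C ∧ ∀ h : ℤ, h ≠ 0 → ∀ y : ℝ, 2 ≤ y →
      ‖∑ m ∈ Finset.Ioc ⌊y⌋ ⌊2 * y⌋, eC ((h : ℝ) * (m : ℝ) ^ (1 / c))‖ ≤
        C * (|(h : ℝ)| ^ ((1 : ℝ) / 2) * y ^ (1 / (2 * c)) +
          |(h : ℝ)|⁻¹ * y ^ (1 - 1 / c)) := by
  obtain ⟨C, hC, hbound⟩ := stmt12_general c hc1
  exact ⟨C, hC, fun h hh y hy ↦ hbound h (Int.cast_ne_zero.2 hh) y (by linarith)⟩
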